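/- Let q be a prime power and let r, δ, M, N be positive integers with δ > 1, q ≥ N > M > 1, and r + δ - 1 ≤ q. Let a = (α_1,...,α_{r+δ-1}) be a vector of distinct elements of F_q and v = (v_1,...,v_{r+δ-1}) a vector of nonzero elements of F_q. Let C_1 = ⋯ = C_{M-1} = GRS_r(a,v), which is an [r+δ-1, r, δ]_q MDS code, and let C_M = GRS_1(a,v). Let C = (C_1,...,C_M)·A be the matrix-product code, where A is an M×N NSC matrix over F_q. If (r-1)(N-M+1) ≤ δ, then C is an optimal (r,δ)-LRC with parameters [N(r+δ-1), (M-1)r+1, (N-M+1)(r+δ-1)]_q. -/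

import Mathlib

namespace LRCPaper

noncomputable section Defs

variable {F : Type} [Field F] [Fintype F] [DecidableEq F]

/-- The punctured code of `C` on the coordinate set `S`: delete all coordinates outside `S`. -/
def punctureCode {ι : Type} [Fintype ι] (C : Submodule F (ι → F)) (S : Finset ι) :
    Submodule F ({ x // x ∈ S } → F) :=
  C.map (LinearMap.funLeft F F (fun j : { x // x ∈ S } => (j : ι)))

/-- Every nonzero codeword of `C` has Hamming weight at least `δ`
(i.e. the minimum distance of `C` is at least `δ`). -/
def minWtGe {ι : Type} [Fintype ι] (C : Submodule F (ι → F)) (δ : ℕ) : Prop :=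
  ∀ c ∈ C, c ≠ 0 → δ ≤ hammingNorm c

/-- The minimum Hamming distance of the linear code `C` is exactly `d`. -/
def minDistIs {ι : Type} [Fintype ι] (C : Submodule F (ι → F)) (d : ℕ) : Prop :=
  (∃ c ∈ C, c ≠ 0 ∧ hammingNorm c = d) ∧ minWtGe C d

/-- The `i`-th code symbol of `C` has `(r, δ)`-locality. -/
def symbolHasLocality {ι : Type} [Fintype ι] (C : Submodule F (ι → F)) (r δ : ℕ) (i : ι) :
    Prop :=
  ∃ S : Finset ι, i ∈ S ∧ S.card ≤ r + δ - 1 ∧ minWtGe (punctureCode C S) δ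

/-- `C` is an `(r, δ)`-locally repairable code. -/
def IsLRC {ι : Type} [Fintype ι] (C : Submodule F (ι → F)) (r δ : ℕ) : Prop :=
  ∀ i : ι, symbolHasLocality C r δ i

/-- The right-hand side `n - k + 1 - (⌈k/r⌉ - 1)(δ - 1)` of the Singleton-type bound
for `(r, δ)`-LRCs, as an integer. -/
def optBound (n k r δ : ℕ) : ℤ :=
  (n : ℤ) - (k : ℤ) + 1 - (⌈(k : ℚ) / (r : ℚ)⌉ - 1) * ((δ : ℤ) - 1)

/-- `C` is an optimal `(r, δ)`-LRC with parameters `[card ι, k, d]`. -/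
def IsOptimalLRC {ι : Type} [Fintype ι] (C : Submodule F (ι → F)) (k d r δ : ℕ) : Prop :=
  IsLRC C r δ ∧ Module.finrank F ↥C = k ∧ minDistIs C d ∧
    (d : ℤ) = optBound (Fintype.card ι) k r δ

/-- `C` is an optimal `(r, δ)`-LRC (its minimum distance meets the Singleton-type bound). -/
def IsOptimalLRCCode {ι : Type} [Fintype ι] (C : Submodule F (ι → F)) (r δ : ℕ) : Prop :=
  IsLRC C r δ ∧ ∃ d : ℕ, minDistIs C d ∧
    (d : ℤ) = optBound (Fintype.card ι) (Module.finrank F ↥C) r δ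

/-- The linear map underlying the matrix-product construction: it sends
`(c_1, …, c_M)` to `(∑_ℓ c_ℓ a_{ℓ,1}, …, ∑_ℓ c_ℓ a_{ℓ,N})`. -/
def mpMap {ι : Type} [Fintype ι] {M N : ℕ} (A : Matrix (Fin M) (Fin N) F) :
    (Fin M → ι → F) →ₗ[F] (Fin N × ι → F) where
  toFun c := fun p => ∑ ℓ : Fin M, c ℓ p.2 * A ℓ p.1
  map_add' x y := by
    funext p
    simp [add_mul, Finset.sum_add_distrib]
  map_smul' a x := by
    funext p
    simp [Finset.mul_sum, mul_assoc]

/-- The matrix-product code `(C_1, …, C_M) · A`, a linear code of length `N * card ι`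
with coordinates indexed by `Fin N × ι`. -/
def matrixProductCode {ι : Type} [Fintype ι] {M N : ℕ}
    (Cs : Fin M → Submodule F (ι → F)) (A : Matrix (Fin M) (Fin N) F) :
    Submodule F (Fin N × ι → F) :=
  (Submodule.pi Set.univ Cs).map (mpMap A)

/-- The linear code of length `N` generated by the first `i` rows of `A`. -/
def rowSpanCode {M N : ℕ} (A : Matrix (Fin M) (Fin N) F) (i : ℕ) :
    Submodule F (Fin N → F) :=
  Submodule.span F {w : Fin N → F | ∃ ℓ : Fin M, (ℓ : ℕ) < i ∧ w = A ℓ}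

/-- `A` is nonsingular by columns (NSC): for every `i ≤ M`, every `i × i` submatrix
formed by choosing `i` columns of the first `i` rows of `A` is nonsingular. -/
def IsNSC {M N : ℕ} (A : Matrix (Fin M) (Fin N) F) : Prop :=
  ∀ (i : ℕ) (hi : i ≤ M) (f : Fin i → Fin N), StrictMono f →
    (Matrix.of fun a b : Fin i => A (Fin.castLE hi a) (f b)).det ≠ 0

/-- Evaluation map underlying generalized Reed–Solomon codes:
`p ↦ (v_1 p(a_1), …, v_n p(a_n))`. -/
def grsMap {n : ℕ} (a v : Fin n → F) : Polynomial F →ₗ[F] (Fin n → F) where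
  toFun p := fun i => v i * Polynomial.eval (a i) p
  map_add' p q := by funext i; simp [mul_add]
  map_smul' c p := by funext i; simp [mul_left_comm]

/-- The generalized Reed–Solomon code `GRS_k(a, v)`. -/
def GRSCode {n : ℕ} (k : ℕ) (a v : Fin n → F) : Submodule F (Fin n → F) :=
  (Polynomial.degreeLT F k).map (grsMap a v)

/-- The set of indices of nonzero columns of `H`. -/
def colSupport {m n : ℕ} (H : Matrix (Fin m) (Fin n) F) : Finset (Fin n) :=
  Finset.univ.filter fun j => ∃ i, H i j ≠ 0

/-- Entry `(i, j)` (0-based) of the `2(δ-1) × (2m-1)` matrix `Ĥ`, built from the distinct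
elements `α 0, …, α (m-1)` and nonzero scalars `lam 0, …, lam (m-1)`. -/
def hatEntry (δ m : ℕ) (α lam : ℕ → F) (i j : ℕ) : F :=
  if i < δ - 1 then (if j < m then lam j * α j ^ i else 0)
  else (if m - 1 ≤ j then lam (2 * m - 2 - j) * α (2 * m - 2 - j) ^ (i - (δ - 1)) else 0)

/-- Entry `(i, j)` (0-based) of the `v(δ-1) × (vm-1)` block-diagonal matrix
`ℋ = H ⊕ ⋯ ⊕ H ⊕ Ĥ` (`v - 2` diagonal copies of `H` followed by `Ĥ`). -/
def calHEntry (δ m v : ℕ) (α lam : ℕ → F) (i j : ℕ) : F :=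
  if i < (v - 2) * (δ - 1) then
    (if j < (v - 2) * m ∧ j / m = i / (δ - 1) then lam (j % m) * α (j % m) ^ (i % (δ - 1))
      else 0)
  else
    (if (v - 2) * m ≤ j then hatEntry δ m α lam (i - (v - 2) * (δ - 1)) (j - (v - 2) * m)
      else 0)

/-- Entry `(i, j)` (0-based) of the `(v(δ-1)+τ) × (vm-1)` matrix `H̃`, obtained by appending
the row block `(A, …, A, Â)` below `ℋ`. -/
def tildeHEntry (δ m v : ℕ) (α lam : ℕ → F) (i j : ℕ) : F :=
  if i < v * (δ - 1) then calHEntry δ m v α lam i j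
  else
    lam (if j < (v - 2) * m then j % m
          else (if j - (v - 2) * m < m then j - (v - 2) * m
                else 2 * m - 2 - (j - (v - 2) * m))) *
      α (if j < (v - 2) * m then j % m
          else (if j - (v - 2) * m < m then j - (v - 2) * m
                else 2 * m - 2 - (j - (v - 2) * m))) ^
        ((δ - 1) + (i - v * (δ - 1)))

end Defs
section Helpers

set_option linter.unusedSectionVars false

variable {F : Type} [Field F] [Fintype F] [DecidableEq F]

lemma nsc_zeros {M N : ℕ} {A : Matrix (Fin M) (Fin N) F} (hA : IsNSC A) (i : ℕ) (hi : i ≤ M)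
    (x : Fin M → F) (hx : x ≠ 0) (hsup : ∀ ℓ : Fin M, i ≤ (ℓ : ℕ) → x ℓ = 0) :
    (Finset.univ.filter fun j : Fin N => ∑ ℓ, x ℓ * A ℓ j = 0).card < i := by
  by_contra hcon
  push Not at hcon
  obtain ⟨s, hs, hcard⟩ := Finset.exists_subset_card_eq hcon
  have hdet := hA i hi (s.orderEmbOfFin hcard) (s.orderEmbOfFin hcard).strictMono
  have h0 : (fun a : Fin i => x (Fin.castLE hi a)) = 0 := by
    apply Matrix.eq_zero_of_vecMul_eq_zero hdet
    funext b
    have hb := hs (s.orderEmbOfFin_mem hcard b)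
    simp only [Finset.mem_filter, Finset.mem_univ, true_and] at hb
    simp only [Matrix.vecMul, dotProduct, Matrix.of_apply, Pi.zero_apply]
    rw [← hb]
    apply Finset.sum_of_injOn (Fin.castLE hi) (Fin.castLE_injective hi).injOn
    · simp
    · intro ℓ _ hℓ
      rw [hsup ℓ, zero_mul]
      by_contra hlt
      push Not at hlt
      exact hℓ ⟨⟨ℓ, hlt⟩, by simp, by ext; simp⟩
    · intro a _; rfl
  apply hx
  funext ℓ
  by_cases h : i ≤ (ℓ : ℕ)
  · exact hsup ℓ h
  · have := congrFun h0 ⟨ℓ, by omega⟩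
    simpa using this

lemma nsc_weight {M N : ℕ} {A : Matrix (Fin M) (Fin N) F} (hA : IsNSC A) (i : ℕ) (hi : i ≤ M)
    (x : Fin M → F) (hx : x ≠ 0) (hsup : ∀ ℓ : Fin M, i ≤ (ℓ : ℕ) → x ℓ = 0) :
    N + 1 ≤ i + (Finset.univ.filter fun j : Fin N => ∑ ℓ, x ℓ * A ℓ j ≠ 0).card := by
  have h1 := nsc_zeros hA i hi x hx hsup
  have h2 := Finset.card_filter_add_card_filter_not (s := (Finset.univ : Finset (Fin N)))
    (fun j : Fin N => ∑ ℓ, x ℓ * A ℓ j = 0)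
  simp only [Finset.card_univ, Fintype.card_fin] at h2
  simp only [ne_eq]
  omega

lemma grs_weight {n k : ℕ} {a v : Fin n → F} (ha : Function.Injective a) (hv : ∀ i, v i ≠ 0)
    {c : Fin n → F} (hc : c ∈ GRSCode k a v) (h0 : c ≠ 0) : n + 1 ≤ k + hammingNorm c := by
  obtain ⟨p, hp, rfl⟩ := hc
  have hp' : p.degree < k := Polynomial.mem_degreeLT.1 hp
  have hp0 : p ≠ 0 := by rintro rfl; simp at h0
  have h2 := Finset.card_filter_add_card_filter_not (s := (Finset.univ : Finset (Fin n)))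
    (fun j : Fin n => grsMap a v p j = 0)
  simp only [Finset.card_univ, Fintype.card_fin] at h2
  have h3 : hammingNorm (grsMap a v p) =
    (Finset.univ.filter fun j : Fin n => ¬ grsMap a v p j = 0).card := rfl
  suffices (Finset.univ.filter fun j : Fin n => grsMap a v p j = 0).card < k by omega
  by_contra hcon
  push Not at hcon
  apply hp0
  apply Polynomial.eq_zero_of_degree_lt_of_eval_index_eq_zero
    (s := Finset.univ.filter fun j : Fin n => grsMap a v p j = 0) (v := a) ha.injOn
  · exact lt_of_lt_of_le hp' (by exact_mod_cast hcon)
  · intro i hi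
    have : v i * Polynomial.eval (a i) p = 0 := (Finset.mem_filter.1 hi).2
    exact (mul_eq_zero.1 this).resolve_left (hv i)

lemma grs_finrank {n k : ℕ} {a v : Fin n → F} (ha : Function.Injective a) (hv : ∀ i, v i ≠ 0)
    (hk : k ≤ n) : Module.finrank F ↥(GRSCode k a v) = k := by
  unfold GRSCode
  rw [← LinearMap.range_domRestrict, LinearMap.finrank_range_of_inj,
    (Polynomial.degreeLTEquiv F k).finrank_eq, Module.finrank_fin_fun]
  rw [← LinearMap.ker_eq_bot, LinearMap.ker_eq_bot']
  rintro ⟨p, hp⟩ h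
  have hp' : p.degree < k := Polynomial.mem_degreeLT.1 hp
  have : p = 0 := by
    apply Polynomial.eq_zero_of_degree_lt_of_eval_index_eq_zero
      (s := Finset.univ) (v := a) ha.injOn
    · refine lt_of_lt_of_le hp' ?_
      simpa using hk
    · intro i _
      have : v i * Polynomial.eval (a i) p = 0 := congrFun h i
      exact (mul_eq_zero.1 this).resolve_left (hv i)
  exact Subtype.ext this

lemma grs_mono {n k l : ℕ} (h : k ≤ l) (a v : Fin n → F) : GRSCode k a v ≤ GRSCode l a v :=
  Submodule.map_mono (Polynomial.degreeLT_mono h)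

lemma smul_mem_grs_one {n : ℕ} (a v : Fin n → F) (x : F) :
    (fun t => x * v t) ∈ GRSCode 1 a v := by
  refine ⟨Polynomial.C x, ?_, ?_⟩
  · apply Polynomial.mem_degreeLT.2
    exact lt_of_le_of_lt Polynomial.degree_C_le (by norm_num)
  · funext t
    simp [grsMap, mul_comm]

lemma mpMap_inj {ι : Type} [Fintype ι] {M N : ℕ} (hMN : M ≤ N)
    {A : Matrix (Fin M) (Fin N) F} (hA : IsNSC A) :
    Function.Injective (mpMap (ι := ι) A) := by
  rw [← LinearMap.ker_eq_bot, LinearMap.ker_eq_bot']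
  intro c hc
  by_contra h0
  obtain ⟨ℓ, hℓ⟩ := Function.ne_iff.1 h0
  obtain ⟨t, ht⟩ := Function.ne_iff.1 hℓ
  have := nsc_weight hA M le_rfl (fun ℓ => c ℓ t) (fun h => ht (congrFun h ℓ))
    (fun ℓ h => absurd ℓ.2 (by omega))
  rw [Finset.filter_false_of_mem] at this
  · simp at this; omega
  · intro j _ h
    exact h (congrFun hc (j, t))

/-- A product of submodules is linearly equivalent to the `Submodule.pi`. -/
def piSubEquiv {ι : Type} {M : ℕ} (Cs : Fin M → Submodule F (ι → F)) :
    ↥(Submodule.pi Set.univ Cs) ≃ₗ[F] ((i : Fin M) → ↥(Cs i)) where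
  toFun c := fun i => ⟨c.1 i, c.2 i trivial⟩
  invFun c := ⟨fun i => (c i).1, fun i _ => (c i).2⟩
  map_add' _ _ := rfl
  map_smul' _ _ := rfl
  left_inv _ := rfl
  right_inv _ := rfl

lemma mp_finrank {ι : Type} [Fintype ι] {M N : ℕ} (hMN : M ≤ N)
    {A : Matrix (Fin M) (Fin N) F} (hA : IsNSC A) (Cs : Fin M → Submodule F (ι → F)) :
    Module.finrank F ↥(matrixProductCode Cs A) = ∑ i, Module.finrank F ↥(Cs i) := by
  unfold matrixProductCode
  rw [← (Submodule.equivMapOfInjective _ (mpMap_inj hMN hA) _).finrank_eq,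
    (piSubEquiv Cs).finrank_eq, Module.finrank_pi_fintype]

lemma hammingNorm_prod {ι : Type} [Fintype ι] {N : ℕ} (w : Fin N × ι → F) :
    hammingNorm w = ∑ t, (Finset.univ.filter fun j : Fin N => w (j, t) ≠ 0).card := by
  simp only [hammingNorm, Finset.card_filter]
  rw [Fintype.sum_prod_type_right]

lemma mp_weight {ι : Type} [Fintype ι] {M N : ℕ}
    {A : Matrix (Fin M) (Fin N) F} (hA : IsNSC A) (c : Fin M → ι → F) (i : Fin M)
    (hsup : ∀ ℓ : Fin M, i < ℓ → c ℓ = 0) :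
    (N - i) * hammingNorm (c i) ≤ hammingNorm (mpMap A c) := by
  rw [hammingNorm_prod, hammingNorm, Finset.card_filter, Finset.mul_sum]
  apply Finset.sum_le_sum
  intro t _
  split_ifs with h
  · have := nsc_weight hA (i + 1) i.2 (fun ℓ => c ℓ t) (fun h' => h (congrFun h' i))
      (fun ℓ hl => by simp [hsup ℓ (by rw [Fin.lt_def]; omega)])
    change _ ≤ (Finset.univ.filter fun j : Fin N => ∑ ℓ, c ℓ t * A ℓ j ≠ 0).card
    omega
  · simp

lemma exists_low {M N : ℕ} (hM : 1 ≤ M) (hMN : M ≤ N)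
    {A : Matrix (Fin M) (Fin N) F} (hA : IsNSC A) :
    ∃ x : Fin M → F, x ≠ 0 ∧
      (Finset.univ.filter fun j : Fin N => ∑ ℓ, x ℓ * A ℓ j ≠ 0).card = N - M + 1 := by
  let f : (Fin M → F) →ₗ[F] (Fin (M - 1) → F) :=
    Matrix.vecMulLinear (Matrix.of fun ℓ (j : Fin (M - 1)) => A ℓ (Fin.castLE (by omega) j))
  have hker : LinearMap.ker f ≠ ⊥ := by
    apply LinearMap.ker_ne_bot_of_finrank_lt
    simp; omega
  obtain ⟨x, hx, hx0⟩ := (Submodule.ne_bot_iff _).1 hker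
  refine ⟨x, hx0, ?_⟩
  have h1 := nsc_weight hA M le_rfl x hx0 (fun ℓ h => absurd ℓ.2 (by omega))
  have h2 := Finset.card_filter_add_card_filter_not (s := (Finset.univ : Finset (Fin N)))
    (fun j : Fin N => ∑ ℓ, x ℓ * A ℓ j = 0)
  simp only [Finset.card_univ, Fintype.card_fin] at h2
  have h3 : M - 1 ≤ (Finset.univ.filter fun j : Fin N => ∑ ℓ, x ℓ * A ℓ j = 0).card := by
    have : ((Finset.univ : Finset (Fin (M - 1))).image
        (Fin.castLE (show M - 1 ≤ N by omega))).card = M - 1 := by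
      rw [Finset.card_image_of_injective _ (Fin.castLE_injective _)]; simp
    rw [← this]
    apply Finset.card_le_card
    intro j hj
    obtain ⟨b, _, rfl⟩ := Finset.mem_image.1 hj
    simp only [Finset.mem_filter, Finset.mem_univ, true_and]
    exact congrFun (LinearMap.mem_ker.1 hx) b
  simp only [ne_eq] at h1 ⊢
  omega

lemma puncture_col {n N : ℕ} (w : Fin N × Fin n → F) (j : Fin N) :
    hammingNorm (fun t => w (j, t)) =
    hammingNorm (LinearMap.funLeft F F
      (fun p : { x // x ∈ (Finset.univ : Finset (Fin n)).map
        ⟨fun t => (j, t), Prod.mk_right_injective j⟩ } => (p : Fin N × Fin n)) w) := by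
  unfold hammingNorm
  apply Finset.card_bij (fun t _ => ⟨(j, t), by simp⟩)
  · intro t ht
    exact Finset.mem_filter.2 ⟨Finset.mem_univ _, (Finset.mem_filter.1 ht).2⟩
  · intro t _ t' _ h
    simpa using h
  · rintro ⟨⟨j', t⟩, hp⟩ h
    obtain rfl : j = j' := by simpa using hp
    exact ⟨t, Finset.mem_filter.2 ⟨Finset.mem_univ _, (Finset.mem_filter.1 h).2⟩, rfl⟩

lemma ite_finrank {ι : Type} (P : Prop) [Decidable P] (C D : Submodule F (ι → F)) :
    Module.finrank F ↥(if P then C else D) =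
      if P then Module.finrank F ↥C else Module.finrank F ↥D := by
  by_cases h : P
  · rw [if_pos h, if_pos h]
  · rw [if_neg h, if_neg h]

end Helpers

/-- Corollary 1: the matrix-product code of
`C_1 = ⋯ = C_{M-1} = GRS_r(a, v)` and `C_M = GRS_1(a, v)` by an `M × N` NSC matrix,
with `(r-1)(N-M+1) ≤ δ`, is an optimal `(r,δ)`-LRC with parameters
`[N(r+δ-1), (M-1)r+1, (N-M+1)(r+δ-1)]_q`. -/
theorem grs_matrixProduct_optimal
    (q : ℕ) (hq : IsPrimePow q)
    (F : Type) [Field F] [Fintype F] [DecidableEq F] (hF : Fintype.card F = q)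
    (r δ M N : ℕ) (hδ : 1 < δ) (hr : 0 < r) (hM : 1 < M) (hMN : M < N) (hNq : N ≤ q)
    (hmq : r + δ - 1 ≤ q)
    (a v : Fin (r + δ - 1) → F) (ha : Function.Injective a) (hv : ∀ i, v i ≠ 0)
    (A : Matrix (Fin M) (Fin N) F) (hA : IsNSC A)
    (hcond : (r - 1) * (N - M + 1) ≤ δ) :
    IsOptimalLRC
      (matrixProductCode
        (fun i : Fin M => if (i : ℕ) < M - 1 then GRSCode r a v else GRSCode 1 a v) A)
      ((M - 1) * r + 1) ((N - M + 1) * (r + δ - 1)) r δ := by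
  have hmem : ∀ (c : Fin M → Fin (r + δ - 1) → F),
      c ∈ Submodule.pi Set.univ
        (fun i : Fin M => if (i : ℕ) < M - 1 then GRSCode r a v else GRSCode 1 a v) →
      ∀ i, c i ∈ GRSCode r a v := by
    intro c hc i
    have h := hc i trivial
    simp only at h
    split_ifs at h
    · exact h
    · exact grs_mono hr a v h
  refine ⟨?_, ?_, ⟨?_, ?_⟩, ?_⟩
  · rintro ⟨j, t⟩
    refine ⟨(Finset.univ : Finset (Fin (r + δ - 1))).map
        ⟨fun t => (j, t), Prod.mk_right_injective j⟩, by simp, by simp, ?_⟩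
    rintro _ ⟨_, ⟨c, hc, rfl⟩, rfl⟩ h0
    rw [← hammingNorm_pos_iff, ← puncture_col, hammingNorm_pos_iff] at h0
    rw [← puncture_col]
    have hg : (fun t => mpMap A c (j, t)) ∈ GRSCode r a v := by
      have : (fun t => mpMap A c (j, t)) = ∑ ℓ, A ℓ j • c ℓ := by
        funext t
        simp [mpMap, Finset.sum_apply, mul_comm]
      rw [this]
      exact Submodule.sum_mem _ fun ℓ _ => Submodule.smul_mem _ _ (hmem c hc ℓ)
    have := grs_weight ha hv hg h0
    omega
  · rw [mp_finrank hMN.le hA]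
    have hterm : ∀ i : Fin M, Module.finrank F
        ↥(if (i : ℕ) < M - 1 then GRSCode r a v else GRSCode 1 a v) =
        if (i : ℕ) < M - 1 then r else 1 := by
      intro i
      rw [ite_finrank, grs_finrank ha hv (show r ≤ r + δ - 1 by omega),
        grs_finrank ha hv (show 1 ≤ r + δ - 1 by omega)]
    rw [Finset.sum_congr rfl fun i _ => hterm i]
    clear hterm hmem
    obtain ⟨M, rfl⟩ : ∃ M', M = M' + 1 := ⟨M - 1, by omega⟩
    rw [Fin.sum_univ_castSucc]
    simp
  · obtain ⟨x, hx, hw⟩ := exists_low hM.le hMN.le hA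
    have hnorm : hammingNorm (mpMap A (fun ℓ t => x ℓ * v t)) =
        (N - M + 1) * (r + δ - 1) := by
      rw [hammingNorm_prod]
      rw [Finset.sum_congr rfl (g := fun _ => N - M + 1)]
      · simp [mul_comm]
      · intro t _
        rw [← hw]
        congr 1
        ext j
        have : mpMap A (fun ℓ t => x ℓ * v t) (j, t) = v t * ∑ ℓ, x ℓ * A ℓ j := by
          rw [Finset.mul_sum]
          change ∑ ℓ, (x ℓ * v t) * A ℓ j = _
          apply Finset.sum_congr rfl
          intro ℓ _
          ring
        simp [this, hv t]
    refine ⟨_, ⟨fun ℓ t => x ℓ * v t, ?_, rfl⟩, ?_, hnorm⟩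
    · intro ℓ _
      have := smul_mem_grs_one a v (x ℓ)
      simp only
      split_ifs
      · exact grs_mono hr a v this
      · exact this
    · rw [← hammingNorm_pos_iff, hnorm]
      apply Nat.mul_pos <;> omega
  · rintro _ ⟨c, hc, rfl⟩ h0
    have hc0 : c ≠ 0 := by rintro rfl; simp at h0
    obtain ⟨i, hi, hmax⟩ : ∃ i, c i ≠ 0 ∧ ∀ ℓ, i < ℓ → c ℓ = 0 := by
      have hne : (Finset.univ.filter fun i => c i ≠ 0).Nonempty := by
        obtain ⟨i, hi⟩ := Function.ne_iff.1 hc0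
        exact ⟨i, by simpa using hi⟩
      obtain ⟨i, hi⟩ := Finset.exists_max_image _ id hne
      simp only [Finset.mem_filter, Finset.mem_univ, true_and, id] at hi
      refine ⟨i, hi.1, fun ℓ hl => ?_⟩
      by_contra h
      exact absurd (hi.2 ℓ h) (not_le.2 hl)
    refine le_trans ?_ (mp_weight hA c i hmax)
    have hci := hc i trivial
    simp only at hci
    have hiM := i.2
    split_ifs at hci with hlt
    · have h1 := grs_weight ha hv hci hi
      calc (N - M + 1) * (r + δ - 1) = (N - M + 1) * δ + (r - 1) * (N - M + 1) := by
            rw [show r + δ - 1 = δ + (r - 1) by omega]; ring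
        _ ≤ (N - M + 1) * δ + δ := by omega
        _ = (N - M + 2) * δ := by ring
        _ ≤ _ := Nat.mul_le_mul (by omega) (by omega)
    · have h1 := grs_weight ha hv hci hi
      exact Nat.mul_le_mul (by omega) (by omega)
  · have hceil : ⌈(((M - 1) * r + 1 : ℕ) : ℚ) / (r : ℚ)⌉ = (M : ℤ) := by
      have hr' : (0 : ℚ) < r := by exact_mod_cast hr
      have hr1 : (1 : ℚ) ≤ r := by exact_mod_cast hr
      rw [Int.ceil_eq_iff]
      push_cast [Nat.cast_sub hM.le]
      constructor
      · rw [lt_div_iff₀ hr']; linarith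
      · rw [div_le_iff₀ hr']; linarith
    unfold optBound
    rw [hceil]
    simp only [Fintype.card_prod, Fintype.card_fin]
    push_cast [Nat.cast_sub hM.le, Nat.cast_sub hMN.le, Nat.cast_sub (show 1 ≤ r + δ by omega)]
    ring

end LRCPaper
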